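/- The edge set of every 3-edge-connected cubic graph can be partitioned into a 1-base and a 2-base; equivalently, every 3-edge-connected cubic graph has a peripheral 2-base. -/

import Mathlib

open scoped Classical

/-- A multigraph with an orientation: each edge `e` has a source `src e` and a target `tgt e`.
Loops and parallel edges are allowed. -/
structure Multigraph (V E : Type) where
  src : E → V
  tgt : E → V

namespace Multigraph

variable {V E : Type}

/-- `u` and `v` are joined by some edge satisfying the predicate `P`. -/
def adjVia (G : Multigraph V E) (P : E → Prop) (u v : V) : Prop :=
  ∃ e, P e ∧ ((G.src e = u ∧ G.tgt e = v) ∨ (G.src e = v ∧ G.tgt e = u))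

/-- `v` is reachable from `u` using only edges satisfying `P`. -/
def Reaches (G : Multigraph V E) (P : E → Prop) : V → V → Prop :=
  Relation.ReflTransGen (G.adjVia P)

/-- The graph is connected when only edges satisfying `P` are kept (all edges deleted
whose predicate fails, all vertices kept). -/
def ConnectedVia (G : Multigraph V E) (P : E → Prop) : Prop :=
  Nonempty V ∧ ∀ u v : V, G.Reaches P u v

def Connected (G : Multigraph V E) : Prop :=
  G.ConnectedVia fun _ => True

/-- `G` is `k`-edge-connected: it is connected and has no edge cut of size less than `k`;
equivalently, deleting any set of fewer than `k` edges leaves it connected. -/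
def EdgeConnected (G : Multigraph V E) (k : ℕ) : Prop :=
  ∀ S : Set E, S.ncard < k → G.ConnectedVia fun e => e ∉ S

/-- The degree of a vertex (loops counted twice). -/
noncomputable def degree (G : Multigraph V E) (v : V) : ℕ :=
  {e | G.src e = v}.ncard + {e | G.tgt e = v}.ncard

/-- Every vertex has degree exactly 3. -/
def Cubic (G : Multigraph V E) : Prop :=
  ∀ v : V, G.degree v = 3

/-- `φ : E → Γ` is a flow: at every vertex, the sum over outgoing edges equals the
sum over incoming edges. -/
def IsFlow [Fintype E] {Γ : Type} [AddCommGroup Γ] (G : Multigraph V E) (φ : E → Γ) : Prop :=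
  ∀ v : V, (∑ e : E, if G.src e = v then φ e else 0) = ∑ e : E, if G.tgt e = v then φ e else 0

/-- The vertex `v` is an endpoint of some edge of `C`. -/
def touches (G : Multigraph V E) (C : Set E) (v : V) : Prop :=
  ∃ e ∈ C, G.src e = v ∨ G.tgt e = v

/-- An edge set `C` is (the edge set of) a cycle: it is nonempty, every vertex it touches
has degree exactly 2 in it, and it is connected. -/
def IsCycle (G : Multigraph V E) (C : Set E) : Prop :=
  C.Nonempty ∧
  (∀ v : V, G.touches C v →
    ({e ∈ C | G.src e = v}.ncard + {e ∈ C | G.tgt e = v}.ncard = 2)) ∧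
  (∀ u v : V, G.touches C u → G.touches C v → G.Reaches (· ∈ C) u v)

/-- `R` is `k`-closed: every cycle with at least one edge outside `R` has at least
`k+1` edges outside `R`. -/
def Closed (G : Multigraph V E) (k : ℕ) (R : Set E) : Prop :=
  ∀ C : Set E, G.IsCycle C → (C \ R).Nonempty → k + 1 ≤ (C \ R).ncard

/-- The `k`-closure `⟨S⟩ₖ` of `S` : the minimal `k`-closed set containing `S`
(the family of `k`-closed sets is closed under intersections). -/
def kClosure (G : Multigraph V E) (k : ℕ) (S : Set E) : Set E :=
  ⋂₀ {R : Set E | S ⊆ R ∧ G.Closed k R}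

/-- `S` is a `k`-base: its `k`-closure is the whole edge set. -/
def IsBase (G : Multigraph V E) (k : ℕ) (S : Set E) : Prop :=
  G.kClosure k S = Set.univ

/-- An edge set `S` is peripheral if `G − S` is connected. -/
def Peripheral (G : Multigraph V E) (S : Set E) : Prop :=
  G.ConnectedVia fun e => e ∉ S

/-- The spanning subgraph `(V, F)` is a forest, i.e. contains no cycle. -/
def IsForest (G : Multigraph V E) (F : Set E) : Prop :=
  ∀ C : Set E, G.IsCycle C → ¬ C ⊆ F

/-- `vs`, `es` describe a path: distinct vertices `vs 0, …, vs n` and distinct edges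
`es 0, …, es (n-1)` where `es i` joins `vs i` and `vs (i+1)`. -/
def IsPath (G : Multigraph V E) {n : ℕ} (vs : Fin (n + 1) → V) (es : Fin n → E) : Prop :=
  Function.Injective vs ∧ Function.Injective es ∧
  ∀ i : Fin n,
    (G.src (es i) = vs i.castSucc ∧ G.tgt (es i) = vs i.succ) ∨
    (G.src (es i) = vs i.succ ∧ G.tgt (es i) = vs i.castSucc)

/-- The edge `e` has `y` as one endpoint and its other endpoint in `X`,
i.e. `e ∈ E(y, X)`. -/
def joins (G : Multigraph V E) (e : E) (y : V) (X : Set V) : Prop :=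
  (G.src e = y ∧ G.tgt e ∈ X) ∨ (G.tgt e = y ∧ G.src e ∈ X)

/-- `W` is the vertex set of a connected component of `G − X`. -/
def IsComponent (G : Multigraph V E) (X W : Set V) : Prop :=
  W.Nonempty ∧ Disjoint W X ∧
  (∀ u ∈ W, ∀ v : V, v ∉ X → G.adjVia (fun _ => True) u v → v ∈ W) ∧
  (∀ u ∈ W, ∀ v ∈ W, G.Reaches (fun e => G.src e ∉ X ∧ G.tgt e ∉ X) u v)

/-- The subgraph induced on `W`, with only those of its edges satisfying `P` kept,
is connected. -/
def ConnectedOn (G : Multigraph V E) (W : Set V) (P : E → Prop) : Prop :=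
  ∀ u ∈ W, ∀ v ∈ W, G.Reaches (fun e => P e ∧ G.src e ∈ W ∧ G.tgt e ∈ W) u v

/-- The subgraph induced on `W` is `k`-edge-connected. -/
def EdgeConnectedOn (G : Multigraph V E) (W : Set V) (k : ℕ) : Prop :=
  ∀ S : Set E, S.ncard < k → G.ConnectedOn W fun e => e ∉ S

/-- Some cycle lies entirely inside the vertex set `X`. -/
def HasCycleIn (G : Multigraph V E) (X : Set V) : Prop :=
  ∃ C : Set E, G.IsCycle C ∧ ∀ e ∈ C, G.src e ∈ X ∧ G.tgt e ∈ X

/-- The edge cut `E(X, V \ X)`. -/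
def cutEdges (G : Multigraph V E) (X : Set V) : Set E :=
  {e | (G.src e ∈ X ∧ G.tgt e ∉ X) ∨ (G.src e ∉ X ∧ G.tgt e ∈ X)}

/-- A cubic graph is cyclically `k`-edge-connected if every edge cut separating two
cycle-containing parts has at least `k` edges. -/
def CyclicallyEdgeConnected (G : Multigraph V E) (k : ℕ) : Prop :=
  ∀ X : Set V, G.HasCycleIn X → G.HasCycleIn Xᶜ → k ≤ (G.cutEdges X).ncard

/-- `G` is 3-connected: more than 3 vertices, connected, and still connected after
deleting any two vertices. -/
def ThreeConnected [Fintype V] (G : Multigraph V E) : Prop :=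
  3 < Fintype.card V ∧ G.Connected ∧
    ∀ u v : V, G.ConnectedOn {w : V | w ≠ u ∧ w ≠ v} fun _ => True

/-- The graph `G − r` obtained by deleting the vertex `r` and all incident edges. -/
def deleteVertex (G : Multigraph V E) (r : V) :
    Multigraph {v : V // v ≠ r} {e : E // G.src e ≠ r ∧ G.tgt e ≠ r} where
  src e := ⟨G.src e.1, e.2.1⟩
  tgt e := ⟨G.tgt e.1, e.2.2⟩

end Multigraph

/-!
Fix a vertex `x` and let `W` shrink from `V \ {x}` to a single vertex by splitting off sets `D`
such that `D` and `W \ D` are connected, at least two edges lead from `D` out of `W`, and every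
vertex of `D` has a neighbour in `W \ D`. Let `B` collect the edges inside all the sets `D`. The
2-closure of `B` connects the complement of `W` at every stage, since a cycle cannot miss it in just
two edges between `D` and that complement. On the other hand, deleting `B` leaves every vertex of
`D` attached to the smaller set `W \ D`, so `B` is peripheral.

To find `D`, take it minimal subject to all but the last condition. By minimality and the degree
bound, a vertex `v` of `D` with a neighbour in `W \ D` sends at most one edge to any component of
`D \ {v}`, and at most one edge leads from that component out of `W`. If some vertex `m` of `D` had
no neighbour in `W \ D`, the component `M` of `m` among such vertices would be left by at least
three edges, one of them going to such a vertex `v`. For any two of these edges, every edge from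
`D` out of `W` remains accessible from `m` when a suitable one of the two is deleted; yet deleting
any of them makes some edge inaccessible, and deleting the one to `v` all but at most one. With
three edges this is impossible.
-/

namespace Multigraph

variable {V E : Type} {G : Multigraph V E}

section Links

variable {e : E} {u v : V} {A B C : Set V}

/-- `e` joins `u` and `v`. -/
def IsLink (G : Multigraph V E) (e : E) (u v : V) : Prop :=
  (G.src e = u ∧ G.tgt e = v) ∨ (G.src e = v ∧ G.tgt e = u)

/-- The edges with both endpoints in `A`. -/
def inside (G : Multigraph V E) (A : Set V) : Set E :=
  {e | G.src e ∈ A ∧ G.tgt e ∈ A}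

/-- The edge set `E(A, B)`: edges with one endpoint in `A` and the other in `B`. -/
def between (G : Multigraph V E) (A B : Set V) : Set E :=
  {e | ∃ a ∈ A, ∃ b ∈ B, G.IsLink e a b}

theorem isLink_src_tgt (e : E) : G.IsLink e (G.src e) (G.tgt e) := Or.inl ⟨rfl, rfl⟩

theorem IsLink.symm (h : G.IsLink e u v) : G.IsLink e v u := Or.symm h

theorem IsLink.eq_or_eq {a b : V} (h : G.IsLink e u v) (h' : G.IsLink e a b) :
    (u = a ∧ v = b) ∨ (u = b ∧ v = a) := by
  unfold IsLink at *
  grind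

theorem IsLink.mem_inside_iff (h : G.IsLink e u v) : e ∈ G.inside A ↔ u ∈ A ∧ v ∈ A := by
  rcases h with ⟨rfl, rfl⟩ | ⟨rfl, rfl⟩
  exacts [Iff.rfl, and_comm]

theorem inside_mono (h : A ⊆ B) : G.inside A ⊆ G.inside B := fun _ he => ⟨h he.1, h he.2⟩

theorem disjoint_inside_between (h : Disjoint A B) : Disjoint (G.inside A) (G.between A B) := by
  refine Set.disjoint_left.2 ?_
  rintro e he ⟨a, -, b, hb, hl⟩
  exact h.notMem_of_mem_left (hl.mem_inside_iff.1 he).2 hb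

theorem between_comm (A B : Set V) : G.between A B = G.between B A := by
  ext e
  exact ⟨fun ⟨a, ha, b, hb, h⟩ => ⟨b, hb, a, ha, h.symm⟩,
    fun ⟨b, hb, a, ha, h⟩ => ⟨a, ha, b, hb, h.symm⟩⟩

theorem between_mono_left (h : A ⊆ B) : G.between A C ⊆ G.between B C :=
  fun _ ⟨a, ha, b, hb, hl⟩ => ⟨a, h ha, b, hb, hl⟩

theorem between_mono_right (h : B ⊆ C) : G.between A B ⊆ G.between A C :=
  fun _ ⟨a, ha, b, hb, hl⟩ => ⟨a, ha, b, h hb, hl⟩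

theorem mem_between_singleton_iff : e ∈ G.between {v} A ↔ ∃ a ∈ A, G.IsLink e v a := by
  simp only [between, Set.mem_ofPred_eq, Set.mem_singleton_iff, exists_eq_left]

theorem between_union_right (A B C : Set V) :
    G.between A (B ∪ C) = G.between A B ∪ G.between A C := by
  ext e
  constructor
  · rintro ⟨a, ha, b, hb | hb, hl⟩
    exacts [Or.inl ⟨a, ha, b, hb, hl⟩, Or.inr ⟨a, ha, b, hb, hl⟩]
  · rintro (⟨a, ha, b, hb, hl⟩ | ⟨a, ha, b, hb, hl⟩)
    exacts [⟨a, ha, b, Or.inl hb, hl⟩, ⟨a, ha, b, Or.inr hb, hl⟩]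

theorem between_union_left (A B C : Set V) :
    G.between (A ∪ B) C = G.between A C ∪ G.between B C := by
  simp only [between_comm _ C, between_union_right]

theorem disjoint_between_right (hBC : Disjoint B C) (hAC : Disjoint A C) :
    Disjoint (G.between A B) (G.between A C) := by
  refine Set.disjoint_left.2 ?_
  rintro e ⟨a, ha, b, hb, hl⟩ ⟨a', -, c, hc, hl'⟩
  rcases hl.eq_or_eq hl' with ⟨-, rfl⟩ | ⟨rfl, -⟩
  exacts [hBC.notMem_of_mem_left hb hc, hAC.notMem_of_mem_left ha hc]

theorem ncard_between_singleton_le_degree [Finite E] (v : V) (A : Set V) :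
    (G.between {v} A).ncard ≤ G.degree v := by
  have hsub : G.between {v} A ⊆ {e | G.src e = v} ∪ {e | G.tgt e = v} := by
    rintro e ⟨_, rfl, b, -, h | h⟩
    exacts [Or.inl h.1, Or.inr h.2]
  exact (Set.ncard_le_ncard hsub).trans (Set.ncard_union_le _ _)

theorem ncard_between_add_le_degree [Finite E] (hBC : Disjoint B C) (hv : v ∉ C) :
    (G.between {v} B).ncard + (G.between {v} C).ncard ≤ G.degree v := by
  rw [← Set.ncard_union_eq (disjoint_between_right hBC (Set.disjoint_singleton_left.2 hv)),
    ← between_union_right]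
  exact ncard_between_singleton_le_degree v _

end Links

section Reachability

variable {P Q : E → Prop} {e : E} {u v w m : V} {A B : Set V}

/-- Any two vertices of `A` are joined by edges satisfying `P`; the connecting paths may
leave `A`. -/
def PreconnectedVia (G : Multigraph V E) (P : E → Prop) (A : Set V) : Prop :=
  ∀ u ∈ A, ∀ v ∈ A, G.Reaches P u v

/-- The subgraph induced on `A` is connected or empty. -/
def InducedPreconnected (G : Multigraph V E) (A : Set V) : Prop :=
  G.PreconnectedVia (· ∈ G.inside A) A

/-- The vertices reachable from `m` inside the subgraph induced on `A`; this is the component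
of `m` there if `m ∈ A`, and `{m}` otherwise. -/
def componentIn (G : Multigraph V E) (A : Set V) (m : V) : Set V :=
  {u | G.Reaches (· ∈ G.inside A) m u}

theorem IsLink.reaches (h : G.IsLink e u v) (he : P e) : G.Reaches P u v :=
  Relation.ReflTransGen.single ⟨e, he, h⟩

theorem Reaches.mono (h : G.Reaches P u v) (hPQ : ∀ e, P e → Q e) : G.Reaches Q u v :=
  Relation.ReflTransGen.mono (fun _ _ ⟨e, he, hl⟩ => ⟨e, hPQ e he, hl⟩) _ _ h

theorem Reaches.trans (h : G.Reaches P u v) (h' : G.Reaches P v w) : G.Reaches P u w :=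
  Relation.ReflTransGen.trans h h'

theorem Reaches.symm (h : G.Reaches P u v) : G.Reaches P v u := by
  induction h with
  | refl => exact .refl
  | tail _ hstep ih =>
    obtain ⟨e, he, hl⟩ := hstep
    exact (IsLink.symm hl).reaches he |>.trans ih

theorem Reaches.exists_mem_between_compl (h : G.Reaches P u v) (hu : u ∈ A) (hv : v ∉ A) :
    ∃ e ∈ G.between A Aᶜ, P e := by
  induction h with
  | refl => exact absurd hu hv
  | @tail b c _ hstep ih =>
    by_cases hb : b ∈ A
    · obtain ⟨e, he, hl⟩ := hstep
      exact ⟨e, ⟨b, hb, c, hv, hl⟩, he⟩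
    · exact ih hb

theorem preconnectedVia_singleton (P : E → Prop) (v : V) : G.PreconnectedVia P {v} := by
  rintro u rfl w rfl
  exact .refl

theorem PreconnectedVia.mono (h : G.PreconnectedVia P A) (hPQ : ∀ e, P e → Q e) :
    G.PreconnectedVia Q A :=
  fun u hu v hv => (h u hu v hv).mono hPQ

theorem PreconnectedVia.of_forall_exists_reaches (h : G.PreconnectedVia P A)
    (hB : ∀ u ∈ B, ∃ a ∈ A, G.Reaches P u a) : G.PreconnectedVia P B := by
  intro u hu v hv
  obtain ⟨a, ha, hua⟩ := hB u hu
  obtain ⟨b, hb, hvb⟩ := hB v hv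
  exact hua.trans ((h a ha b hb).trans hvb.symm)

theorem preconnectedVia_of_forall_reaches (h : ∀ u ∈ A, G.Reaches P v u) :
    G.PreconnectedVia P A :=
  (preconnectedVia_singleton P v).of_forall_exists_reaches fun u hu => ⟨v, rfl, (h u hu).symm⟩

theorem PreconnectedVia.union (hA : G.PreconnectedVia P A) (hB : G.PreconnectedVia P B)
    (hu : u ∈ A) (hv : v ∈ B) (huv : G.Reaches P u v) : G.PreconnectedVia P (A ∪ B) := by
  refine hA.of_forall_exists_reaches ?_
  rintro w (hw | hw)
  exacts [⟨w, hw, .refl⟩, ⟨u, hu, (hB w hw v hv).trans huv.symm⟩]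

theorem InducedPreconnected.union (hA : G.InducedPreconnected A) (hB : G.InducedPreconnected B)
    (h : (G.between A B).Nonempty) : G.InducedPreconnected (A ∪ B) := by
  obtain ⟨e, a, ha, b, hb, hl⟩ := h
  exact (hA.mono fun _ he => inside_mono Set.subset_union_left he).union
    (hB.mono fun _ he => inside_mono Set.subset_union_right he) ha hb
    (hl.reaches (hl.mem_inside_iff.2 ⟨Or.inl ha, Or.inr hb⟩))

theorem InducedPreconnected.between_inter_sdiff_nonempty (hA : G.InducedPreconnected A)
    (hu : u ∈ A ∩ B) (hv : v ∈ A \ B) : (G.between (A ∩ B) (A \ B)).Nonempty := by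
  obtain ⟨e, ⟨a, ha, b, hb, hl⟩, heA⟩ :=
    (hA u hu.1 v hv.1).exists_mem_between_compl hu.2 hv.2
  obtain ⟨haA, hbA⟩ := hl.mem_inside_iff.1 heA
  exact ⟨e, a, ⟨haA, ha⟩, b, ⟨hbA, hb⟩, hl⟩

theorem EdgeConnected.le_ncard_between_compl {k : ℕ} (hG : G.EdgeConnected k)
    (hA : A.Nonempty) (hA' : Aᶜ.Nonempty) : k ≤ (G.between A Aᶜ).ncard := by
  by_contra! hlt
  obtain ⟨a, ha⟩ := hA
  obtain ⟨b, hb⟩ := hA'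
  obtain ⟨e, he, he'⟩ := ((hG _ hlt).2 a b).exists_mem_between_compl ha hb
  exact he' he

theorem mem_componentIn_self (A : Set V) (m : V) : m ∈ G.componentIn A m :=
  Relation.ReflTransGen.refl

theorem componentIn_subset (hm : m ∈ A) : G.componentIn A m ⊆ A := by
  intro u hu
  by_contra huA
  obtain ⟨e, ⟨a, -, b, hb, hl⟩, he⟩ := Reaches.exists_mem_between_compl hu hm huA
  exact hb (hl.mem_inside_iff.1 he).2

theorem componentIn_mono (h : A ⊆ B) : G.componentIn A m ⊆ G.componentIn B m :=
  fun _ hu => Reaches.mono hu fun _ he => inside_mono h he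

theorem mem_componentIn_of_isLink (hm : m ∈ A) (hu : u ∈ G.componentIn A m) (hv : v ∈ A)
    (hl : G.IsLink e u v) : v ∈ G.componentIn A m :=
  Reaches.trans hu (hl.reaches (hl.mem_inside_iff.2 ⟨componentIn_subset hm hu, hv⟩))

theorem between_componentIn_compl_subset (hm : m ∈ A) :
    G.between (G.componentIn A m) (G.componentIn A m)ᶜ ⊆ G.between (G.componentIn A m) Aᶜ := by
  rintro e ⟨a, ha, b, hb, hl⟩
  exact ⟨a, ha, b, fun hbA => hb (mem_componentIn_of_isLink hm ha hbA hl), hl⟩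

theorem inducedPreconnected_componentIn (A : Set V) (m : V) :
    G.InducedPreconnected (G.componentIn A m) := by
  refine preconnectedVia_of_forall_reaches (v := m) fun u hu => ?_
  induction hu with
  | refl => exact .refl
  | @tail b c hb hstep ih =>
    obtain ⟨e, he, hl⟩ := hstep
    have hc : c ∈ G.componentIn A m := Reaches.trans hb (IsLink.reaches hl he)
    exact ih.trans (IsLink.reaches hl ((IsLink.mem_inside_iff hl).2 ⟨hb, hc⟩))

theorem InducedPreconnected.sdiff_componentIn (hA : G.InducedPreconnected A) (hv : v ∈ A)
    (hm : m ∈ A \ {v}) : G.InducedPreconnected (A \ G.componentIn (A \ {v}) m) := by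
  set C := G.componentIn (A \ {v}) m
  let Y : Set V := C ∪ {u | G.Reaches (· ∈ G.inside (A \ C)) v u}
  refine preconnectedVia_of_forall_reaches (v := v) fun u ⟨huA, huC⟩ => ?_
  suffices u ∈ Y from this.resolve_left huC
  by_contra huY
  obtain ⟨e, a, ⟨haA, haY⟩, b, ⟨hbA, hbY⟩, hl⟩ :=
    hA.between_inter_sdiff_nonempty ⟨hv, Or.inr .refl⟩ ⟨huA, huY⟩
  have hbC : b ∉ C := fun h => hbY (Or.inl h)
  by_cases haC : a ∈ C
  · have hbv : b ≠ v := fun h => hbY (Or.inr (h ▸ .refl))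
    exact hbC (mem_componentIn_of_isLink hm haC ⟨hbA, hbv⟩ hl)
  · have hva : G.Reaches (· ∈ G.inside (A \ C)) v a := haY.resolve_left haC
    exact hbY (Or.inr (hva.trans (hl.reaches (hl.mem_inside_iff.2 ⟨⟨haA, haC⟩, hbA, hbC⟩))))

end Reachability

section Cycles

variable {k : ℕ} {R S F : Set E} {e : E} {u v x : V}

/-- The degree of `x` in the spanning subgraph with edge set `S`, in the form in which it
appears in `IsCycle`. -/
noncomputable def degIn (G : Multigraph V E) (S : Set E) (x : V) : ℕ :=
  {e ∈ S | G.src e = x}.ncard + {e ∈ S | G.tgt e = x}.ncard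

theorem ncard_sep_insert (hS : S.Finite) (he : e ∉ S) (p : E → Prop) :
    {f ∈ insert e S | p f}.ncard = {f ∈ S | p f}.ncard + if p e then 1 else 0 := by
  split_ifs with hp
  · have hsep : {f ∈ insert e S | p f} = insert e {f ∈ S | p f} := by
      ext f; simp only [Set.mem_ofPred_eq, Set.mem_insert_iff]; grind
    rw [hsep, Set.ncard_insert_of_notMem (fun h => he h.1) (hS.subset (Set.sep_subset _ _))]
  · have hsep : {f ∈ insert e S | p f} = {f ∈ S | p f} := by
      ext f; simp only [Set.mem_ofPred_eq, Set.mem_insert_iff]; grind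
    rw [hsep, add_zero]

theorem degIn_insert (hS : S.Finite) (he : e ∉ S) (hl : G.IsLink e u v) (x : V) :
    G.degIn (insert e S) x = G.degIn S x + (if u = x then 1 else 0) + if v = x then 1 else 0 := by
  unfold degIn
  rw [ncard_sep_insert hS he, ncard_sep_insert hS he]
  rcases hl with ⟨rfl, rfl⟩ | ⟨rfl, rfl⟩ <;> omega

/-- `PathSet G P v u T S`: there is a path from `u` to `v` all of whose edges satisfy `P`, with
vertex set `T` and edge set `S`. -/
inductive PathSet (G : Multigraph V E) (P : E → Prop) (v : V) : V → Set V → Set E → Prop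
  | nil : PathSet G P v v {v} ∅
  | cons {u w : V} {e : E} {T : Set V} {S : Set E} (hl : G.IsLink e u w) (he : P e)
      (h : PathSet G P v w T S) (hu : u ∉ T) : PathSet G P v u (insert u T) (insert e S)

namespace PathSet

variable {P : E → Prop} {T : Set V}

theorem exists_suffix (h : G.PathSet P v u T S) (hx : x ∈ T) :
    ∃ T' S', G.PathSet P v x T' S' := by
  induction h with
  | nil =>
    obtain rfl := hx
    exact ⟨_, _, .nil⟩
  | cons hl he h hu ih =>
    rcases hx with rfl | hx
    exacts [⟨_, _, .cons hl he h hu⟩, ih hx]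

theorem exists_of_reaches (h : G.Reaches P u v) : ∃ T S, G.PathSet P v u T S := by
  induction h using Relation.ReflTransGen.head_induction_on with
  | refl => exact ⟨_, _, .nil⟩
  | @head a c hstep _ ih =>
    obtain ⟨e, he, hl⟩ := hstep
    obtain ⟨T, S, hp⟩ := ih
    by_cases ha : a ∈ T
    exacts [hp.exists_suffix ha, ⟨_, _, .cons hl he hp ha⟩]

theorem finite (h : G.PathSet P v u T S) : S.Finite := by
  induction h with
  | nil => exact Set.finite_empty
  | cons _ _ _ _ ih => exact ih.insert _

theorem start_mem (h : G.PathSet P v u T S) : u ∈ T := by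
  cases h with
  | nil => exact rfl
  | cons => exact Set.mem_insert _ _

theorem end_mem (h : G.PathSet P v u T S) : v ∈ T := by
  induction h with
  | nil => exact rfl
  | cons _ _ _ _ ih => exact Set.mem_insert_of_mem _ ih

theorem forall_edge (h : G.PathSet P v u T S) : ∀ e ∈ S, P e := by
  induction h with
  | nil => exact fun _ => False.elim
  | cons _ he _ _ ih => exact Set.forall_mem_insert.2 ⟨he, ih⟩

theorem subset_inside (h : G.PathSet P v u T S) : S ⊆ G.inside T := by
  induction h with
  | nil => exact Set.empty_subset _
  | cons hl _ h _ ih =>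
    exact Set.insert_subset
      (hl.mem_inside_iff.2 ⟨Set.mem_insert _ _, Set.mem_insert_of_mem _ h.start_mem⟩)
      (ih.trans (inside_mono (Set.subset_insert _ _)))

theorem preconnectedVia (h : G.PathSet P v u T S) : G.PreconnectedVia (· ∈ S) T := by
  induction h with
  | nil => exact preconnectedVia_singleton _ v
  | cons hl _ h _ ih =>
    exact (preconnectedVia_singleton _ _).union (ih.mono fun _ => Set.mem_insert_of_mem _)
      rfl h.start_mem (hl.reaches (Set.mem_insert _ _))

/-- Giving both ends of a path an extra half-edge makes every degree on it equal to 2; in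
this form the identity also covers the path with a single vertex. -/
theorem degIn_add (h : G.PathSet P v u T S) (x : V) :
    G.degIn S x + (if u = x then 1 else 0) + (if v = x then 1 else 0) =
      if x ∈ T then 2 else 0 := by
  induction h with
  | nil =>
    simp only [degIn, Set.mem_empty_iff_false, false_and, Set.mem_singleton_iff, eq_comm (a := x)]
    split_ifs <;> simp
  | @cons u w e T S hl _ h hu ih =>
    have heS : e ∉ S := fun he => hu (hl.mem_inside_iff.1 (h.subset_inside he)).1
    rw [degIn_insert h.finite heS hl]
    grind

theorem isCycle_insert (h : G.PathSet P (G.tgt e) (G.src e) T S) (he : e ∉ S) :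
    G.IsCycle (insert e S) := by
  have hT : ∀ x, G.touches (insert e S) x → x ∈ T := by
    rintro x ⟨f, rfl | hf, rfl | rfl⟩
    exacts [h.start_mem, h.end_mem, (h.subset_inside hf).1, (h.subset_inside hf).2]
  refine ⟨Set.insert_nonempty _ _, fun x hx => ?_, fun x y hx hy => ?_⟩
  · have hdeg := h.degIn_add x
    rw [if_pos (hT x hx)] at hdeg
    exact (degIn_insert h.finite he (isLink_src_tgt e) x).trans hdeg
  · exact (h.preconnectedVia x (hT x hx) y (hT y hy)).mono fun _ => Set.mem_insert_of_mem _

end PathSet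

theorem Closed.mem_of_reaches_union (hR : G.Closed k R) (hF : F.Finite) (hFk : F.ncard < k)
    (h : G.Reaches (· ∈ R ∪ F) (G.src e) (G.tgt e)) (heF : e ∉ F) : e ∈ R := by
  by_contra heR
  obtain ⟨T, S, hp⟩ := PathSet.exists_of_reaches h
  have heS : e ∉ S := fun he => (hp.forall_edge e he).elim heR heF
  have hsub : insert e S \ R ⊆ insert e F := by
    rintro f ⟨rfl | hf, hfR⟩
    exacts [Set.mem_insert _ _, Or.inr ((hp.forall_edge f hf).resolve_left hfR)]
  have hclosed : k + 1 ≤ (insert e S \ R).ncard :=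
    hR _ (hp.isCycle_insert heS) ⟨e, Set.mem_insert _ _, heR⟩
  have hle := Set.ncard_le_ncard hsub (hF.insert e)
  have hinsert := Set.ncard_insert_le e F
  omega

theorem Closed.eq_univ (hR : G.Closed k R) (hk : 0 < k) (h : G.PreconnectedVia (· ∈ R) Set.univ) :
    R = Set.univ :=
  Set.eq_univ_of_forall fun _ => hR.mem_of_reaches_union Set.finite_empty (by simpa using hk)
    ((h _ trivial _ trivial).mono fun _ => Or.inl) (Set.notMem_empty _)

theorem Closed.preconnectedVia_union (hR : G.Closed k R) (hk : 1 < k) {A B : Set V}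
    (hA : G.PreconnectedVia (· ∈ R) A) (hB : G.PreconnectedVia (· ∈ R) B)
    (hAB : (G.between A B).Nontrivial) : G.PreconnectedVia (· ∈ R) (A ∪ B) := by
  obtain ⟨e, ⟨a, ha, b, hb, hl⟩, f, ⟨a', ha', b', hb', hl'⟩, hef⟩ := hAB
  have hAf := hA.mono fun _ he => Set.mem_union_left {f} he
  have hBf := hB.mono fun _ he => Set.mem_union_left {f} he
  have hunion : G.PreconnectedVia (· ∈ R ∪ {f}) (A ∪ B) :=
    hAf.union hBf ha' hb' (hl'.reaches (Or.inr rfl))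
  have hends : e ∈ G.inside (A ∪ B) := hl.mem_inside_iff.2 ⟨Or.inl ha, Or.inr hb⟩
  have heR : e ∈ R := hR.mem_of_reaches_union (Set.finite_singleton f) (by simpa using hk)
    (hunion _ hends.1 _ hends.2) hef
  exact hA.union hB ha hb (hl.reaches heR)

theorem isBase_iff : G.IsBase k S ↔ ∀ R, S ⊆ R → G.Closed k R → R = Set.univ := by
  simp only [IsBase, kClosure, Set.sInter_eq_univ, Set.mem_ofPred_eq, and_imp]

theorem Peripheral.isBase_compl (h : G.Peripheral S) (hk : 0 < k) : G.IsBase k Sᶜ :=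
  isBase_iff.2 fun _ hSR hR => hR.eq_univ hk fun u _ v _ => (h.2 u v).mono fun _ he => hSR he

end Cycles

section Detachable

variable {W D M Y : Set V} {u v m : V} {e f f' : E}

/-- A set `D` that can be split off from `W`: both parts are connected, and at least two edges
lead from `D` out of `W`. -/
structure IsDetachable (G : Multigraph V E) (W D : Set V) : Prop where
  subset : D ⊆ W
  sdiff_nonempty : (W \ D).Nonempty
  connected : G.InducedPreconnected D
  sdiff_connected : G.InducedPreconnected (W \ D)
  nontrivial : (G.between D Wᶜ).Nontrivial

/-- The vertices of `A` with a neighbour in `B`. -/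
def attachments (G : Multigraph V E) (A B : Set V) : Set V :=
  {v ∈ A | (G.between {v} B).Nonempty}

theorem exists_isDetachable (hG : G.EdgeConnected 3) (hW : G.InducedPreconnected W)
    (hWc : Wᶜ.Nonempty) (hnt : W.Nontrivial) : ∃ D, G.IsDetachable W D := by
  obtain ⟨v, hv, m, hm, hvm⟩ := hnt
  have hmW : m ∈ W \ {v} := ⟨hm, hvm.symm⟩
  set C := G.componentIn (W \ {v}) m
  have hCW : C ⊆ W := (componentIn_subset hmW).trans Set.sdiff_subset
  have hmC : m ∈ C := mem_componentIn_self _ m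
  have hvC : v ∉ C := fun h => (componentIn_subset hmW h).2 rfl
  have hC : G.InducedPreconnected C := inducedPreconnected_componentIn _ m
  have hWC : G.InducedPreconnected (W \ C) := hW.sdiff_componentIn hv hmW
  have hsplit : G.between W Wᶜ = G.between C Wᶜ ∪ G.between (W \ C) Wᶜ := by
    rw [← between_union_left, Set.union_sdiff_cancel hCW]
  have hcut : 3 ≤ (G.between C Wᶜ).ncard + (G.between (W \ C) Wᶜ).ncard :=
    (hG.le_ncard_between_compl ⟨v, hv⟩ hWc).trans (hsplit ▸ Set.ncard_union_le _ _)
  rcases (by omega : 1 < (G.between C Wᶜ).ncard ∨ 1 < (G.between (W \ C) Wᶜ).ncard)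
    with hlt | hlt
  · exact ⟨C, hCW, ⟨v, hv, hvC⟩, hC, hWC, (Set.one_lt_ncard_iff_nontrivial_and_finite.1 hlt).1⟩
  · have hdd : W \ (W \ C) = C := Set.sdiff_sdiff_cancel_left hCW
    exact ⟨W \ C, Set.sdiff_subset, hdd.symm ▸ ⟨m, hmC⟩, hWC, hdd.symm ▸ hC,
      (Set.one_lt_ncard_iff_nontrivial_and_finite.1 hlt).1⟩

theorem IsDetachable.componentIn (hD : G.IsDetachable W D) (hv : v ∈ G.attachments D (W \ D))
    (hm : m ∈ D \ {v}) (h : (G.between (G.componentIn (D \ {v}) m) Wᶜ).Nontrivial) :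
    G.IsDetachable W (G.componentIn (D \ {v}) m) := by
  have hCD : G.componentIn (D \ {v}) m ⊆ D := (componentIn_subset hm).trans Set.sdiff_subset
  have hvC : v ∉ G.componentIn (D \ {v}) m := fun h => (componentIn_subset hm h).2 rfl
  refine ⟨hCD.trans hD.subset, ⟨v, hD.subset hv.1, hvC⟩, inducedPreconnected_componentIn _ m, ?_, h⟩
  rw [← Set.sdiff_union_sdiff_cancel hD.subset hCD, Set.union_comm]
  exact (hD.connected.sdiff_componentIn hv.1 hm).union hD.sdiff_connected
    (hv.2.mono (between_mono_left (Set.singleton_subset_iff.2 ⟨hv.1, hvC⟩)))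

theorem subsingleton_between_componentIn_of_minimal (hD : Minimal (G.IsDetachable W) D)
    (hv : v ∈ G.attachments D (W \ D)) (hm : m ∈ D \ {v}) :
    (G.between (G.componentIn (D \ {v}) m) Wᶜ).Subsingleton := by
  by_contra hns
  have hle := hD.le_of_le (hD.prop.componentIn hv hm (Set.not_subsingleton_iff.1 hns))
    ((componentIn_subset hm).trans Set.sdiff_subset)
  exact (componentIn_subset hm (hle hv.1)).2 rfl

theorem IsDetachable.between_singleton_nonempty (hD : G.IsDetachable W D) (hv : v ∈ D)
    (hm : m ∈ D \ {v}) (h : (G.between (G.componentIn (D \ {v}) m) Wᶜ).Subsingleton) :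
    (G.between {v} (insert v (G.componentIn (D \ {v}) m) ∪ W \ D)ᶜ).Nonempty := by
  set C := G.componentIn (D \ {v}) m
  have hvC : v ∉ C := fun h => (componentIn_subset hm h).2 rfl
  have hCD : C ⊆ D := (componentIn_subset hm).trans Set.sdiff_subset
  obtain ⟨z, ⟨d, hd, w, hw, hz⟩, hzC⟩ :=
    Set.not_subset.1 fun hsub => hD.nontrivial.not_subsingleton (h.anti hsub)
  by_cases hdv : d = v
  · refine ⟨z, mem_between_singleton_iff.2 ⟨w, ?_, hdv ▸ hz⟩⟩
    rintro ((rfl | hwC) | hwD)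
    exacts [hw (hD.subset hv), hw (hD.subset (hCD hwC)), hw hwD.1]
  · have hdC : d ∉ C := fun hdC => hzC ⟨d, hdC, w, hw, hz⟩
    refine ((hD.connected.sdiff_componentIn hv hm).between_inter_sdiff_nonempty
      ⟨⟨hv, hvC⟩, Set.mem_singleton v⟩ ⟨⟨hd, hdC⟩, hdv⟩).mono
      ((between_mono_left Set.inter_subset_right).trans (between_mono_right ?_))
    rintro b ⟨⟨hbD, hbC⟩, hbv⟩ ((hbv' | hbC') | hbD')
    exacts [hbv hbv', hbC hbC', hbD'.2 hbD]

theorem IsDetachable.subsingleton_between_singleton_componentIn [Finite E]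
    (hD : G.IsDetachable W D) (hv : v ∈ G.attachments D (W \ D)) (hm : m ∈ D \ {v})
    (h : (G.between (G.componentIn (D \ {v}) m) Wᶜ).Subsingleton) (hdeg : G.degree v ≤ 3) :
    (G.between {v} (G.componentIn (D \ {v}) m)).Subsingleton := by
  set C := G.componentIn (D \ {v}) m
  obtain ⟨e, he⟩ := hv.2
  obtain ⟨f, hf⟩ := hD.between_singleton_nonempty hv.1 hm h
  have hvW : v ∉ W \ D := fun h => h.2 hv.1
  have hCW : insert v C ⊆ (W \ D)ᶜ := by
    rintro u (rfl | hu) huW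
    exacts [hvW huW, huW.2 (componentIn_subset hm hu).1]
  have hef : e ≠ f := by
    refine (disjoint_between_right ?_ ?_).ne_of_mem he hf
    · exact Set.disjoint_compl_right_iff_subset.2 Set.subset_union_right
    · exact Set.disjoint_compl_right_iff_subset.2
        (Set.singleton_subset_iff.2 (Or.inl (Set.mem_insert v C)))
  have htwo : 1 < (G.between {v} (insert v C)ᶜ).ncard :=
    Set.one_lt_ncard_iff_nontrivial.2
      ⟨e, between_mono_right (Set.subset_compl_comm.1 hCW) he,
        f, between_mono_right (Set.compl_subset_compl.2 Set.subset_union_left) hf, hef⟩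
  have hthree : (G.between {v} C).ncard + (G.between {v} (insert v C)ᶜ).ncard ≤ 3 :=
    (ncard_between_add_le_degree
      (Set.disjoint_compl_right_iff_subset.2 (Set.subset_insert v C))
      (Set.notMem_compl_iff.2 (Set.mem_insert v C))).trans hdeg
  exact Set.ncard_le_one_iff_subsingleton.1 (by omega)

theorem InducedPreconnected.reaches_sdiff_singleton (hM : G.InducedPreconnected M) (hm : m ∈ M)
    (hMD : M ⊆ D) (hf : f ∈ G.between M Mᶜ) (hv : v ∈ M) :
    G.Reaches (· ∈ G.inside D \ {f}) m v :=
  (hM m hm v hv).mono fun _ he => ⟨inside_mono hMD he,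
    (disjoint_inside_between disjoint_compl_right).ne_of_mem he hf⟩

theorem mem_or_mem_of_mem_between_compl (hf : f ∈ G.between M Mᶜ) (hl : G.IsLink f u v) :
    u ∈ M ∨ v ∈ M := by
  obtain ⟨x, hx, y, -, hxy⟩ := hf
  rcases hxy.eq_or_eq hl with ⟨rfl, -⟩ | ⟨rfl, -⟩
  exacts [Or.inl hx, Or.inr hx]

theorem reaches_sdiff_singleton_or (hM : G.InducedPreconnected M) (hm : m ∈ M) (hMD : M ⊆ D)
    (hf : f ∈ G.between M Mᶜ) (hf' : f' ∈ G.between M Mᶜ) (hne : f ≠ f')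
    (h : G.Reaches (· ∈ G.inside D) m u) :
    G.Reaches (· ∈ G.inside D \ {f}) m u ∨ G.Reaches (· ∈ G.inside D \ {f'}) m u := by
  induction h with
  | refl => exact Or.inl .refl
  | @tail b c _ hstep ih =>
    obtain ⟨e, he, hl⟩ := hstep
    by_cases hc : c ∈ M
    · exact Or.inl (hM.reaches_sdiff_singleton hm hMD hf hc)
    by_cases hb : b ∈ M
    · by_cases hef : e = f
      · exact Or.inr ((hM.reaches_sdiff_singleton hm hMD hf' hb).trans
          (IsLink.reaches hl ⟨he, hef ▸ hne⟩))
      · exact Or.inl ((hM.reaches_sdiff_singleton hm hMD hf hb).trans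
          (IsLink.reaches hl ⟨he, hef⟩))
    · have havoid : ∀ g ∈ G.between M Mᶜ, e ≠ g := by
        rintro _ hg rfl
        exact (mem_or_mem_of_mem_between_compl hg hl).elim hb hc
      exact ih.imp (·.trans (IsLink.reaches hl ⟨he, havoid f hf⟩))
        (·.trans (IsLink.reaches hl ⟨he, havoid f' hf'⟩))

/-- The edges from `D` to `Y` that remain accessible from `m` through `D` once the edge `f` is
deleted. -/
def exitsAvoiding (G : Multigraph V E) (D Y : Set V) (m : V) (f : E) : Set E :=
  G.between {u | G.Reaches (· ∈ G.inside D \ {f}) m u} Y \ {f}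

theorem between_subset_union_exitsAvoiding (hM : G.InducedPreconnected M) (hm : m ∈ M)
    (hMD : M ⊆ D) (hD : G.InducedPreconnected D) (hDY : Disjoint D Y)
    (hf : f ∈ G.between M Mᶜ) (hf' : f' ∈ G.between M Mᶜ) (hne : f ≠ f') :
    G.between D Y ⊆ G.exitsAvoiding D Y m f ∪ G.exitsAvoiding D Y m f' := by
  rintro z ⟨u, hu, y, hy, hz⟩
  have huM (hcut : z ∈ G.between M Mᶜ) : u ∈ M :=
    (mem_or_mem_of_mem_between_compl hcut hz).resolve_right fun h =>
      hDY.notMem_of_mem_left (hMD h) hy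
  by_cases hzf : z = f
  · exact Or.inr ⟨⟨u, hM.reaches_sdiff_singleton hm hMD hf' (huM (hzf ▸ hf)), y, hy, hz⟩,
      hzf ▸ hne⟩
  by_cases hzf' : z = f'
  · exact Or.inl ⟨⟨u, hM.reaches_sdiff_singleton hm hMD hf (huM (hzf' ▸ hf')), y, hy, hz⟩, hzf⟩
  exact (reaches_sdiff_singleton_or hM hm hMD hf hf' hne (hD m (hMD hm) u hu)).imp
    (fun h => ⟨⟨u, h, y, hy, hz⟩, hzf⟩) fun h => ⟨⟨u, h, y, hy, hz⟩, hzf'⟩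

theorem exitsAvoiding_subset_between_componentIn (hm : m ∈ D \ {v})
    (h : (G.between {v} (G.componentIn (D \ {v}) m)).Subsingleton)
    (hf : f ∈ G.between {v} (G.componentIn (D \ {v}) m)) :
    G.exitsAvoiding D Y m f ⊆ G.between (G.componentIn (D \ {v}) m) Y := by
  refine Set.sdiff_subset.trans (between_mono_left fun u hu => ?_)
  induction hu with
  | refl => exact mem_componentIn_self _ m
  | @tail b c _ hstep ih =>
    obtain ⟨e, ⟨heD, hef⟩, hl⟩ := hstep
    have hc : c ∈ D := (IsLink.mem_inside_iff hl |>.1 heD).2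
    have hcv : c ≠ v := by
      rintro rfl
      exact hef (h ⟨c, rfl, b, ih, IsLink.symm hl⟩ hf)
    exact mem_componentIn_of_isLink hm ih ⟨hc, hcv⟩ hl

theorem subsingleton_exitsAvoiding_of_minimal [Finite E] (hD : Minimal (G.IsDetachable W) D)
    (hv : v ∈ G.attachments D (W \ D)) (hm : m ∈ D \ {v}) (hdeg : G.degree v ≤ 3)
    (hf : f ∈ G.between {v} (G.componentIn (D \ {v}) m)) :
    (G.exitsAvoiding D Wᶜ m f).Subsingleton :=
  have hexit := subsingleton_between_componentIn_of_minimal hD hv hm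
  have hlink := hD.prop.subsingleton_between_singleton_componentIn hv hm hexit hdeg
  hexit.anti (exitsAvoiding_subset_between_componentIn hm hlink hf)

/-- The component of `m` in the subgraph of `D` induced on the vertices without neighbours in
`W \ D`. -/
def innerComponent (G : Multigraph V E) (W D : Set V) (m : V) : Set V :=
  G.componentIn (D \ G.attachments D (W \ D)) m

theorem innerComponent_subset (hm : m ∈ D \ G.attachments D (W \ D)) :
    G.innerComponent W D m ⊆ D :=
  (componentIn_subset hm).trans Set.sdiff_subset

theorem innerComponent_subset_componentIn (hv : v ∈ G.attachments D (W \ D)) :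
    G.innerComponent W D m ⊆ G.componentIn (D \ {v}) m :=
  componentIn_mono (Set.sdiff_subset_sdiff_right (Set.singleton_subset_iff.2 hv))

theorem mem_between_innerComponent_compl (hm : m ∈ D \ G.attachments D (W \ D))
    (he : e ∈ G.between (G.innerComponent W D m) (G.innerComponent W D m)ᶜ) :
    e ∈ G.between (G.innerComponent W D m) Wᶜ ∨
      ∃ v ∈ G.attachments D (W \ D), e ∈ G.between {v} (G.innerComponent W D m) := by
  obtain ⟨a, ha, b, hb, hl⟩ := between_componentIn_compl_subset hm he
  by_cases hbW : b ∈ W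
  · obtain ⟨haD, haN⟩ := componentIn_subset hm ha
    have hbD : b ∈ D := by
      by_contra hbD
      exact haN ⟨haD, e, a, rfl, b, ⟨hbW, hbD⟩, hl⟩
    exact Or.inr ⟨b, by_contra fun hbN => hb ⟨hbD, hbN⟩, b, rfl, a, ha, hl.symm⟩
  · exact Or.inl ⟨a, ha, b, hbW, hl⟩

theorem exists_notMem_exitsAvoiding_of_minimal [Finite E] (hD : Minimal (G.IsDetachable W) D)
    (hdeg : ∀ v, G.degree v ≤ 3) (hm : m ∈ D \ G.attachments D (W \ D))
    (hf : f ∈ G.between (G.innerComponent W D m) (G.innerComponent W D m)ᶜ) :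
    ∃ z ∈ G.between D Wᶜ, z ∉ G.exitsAvoiding D Wᶜ m f := by
  rcases mem_between_innerComponent_compl hm hf with hfW | ⟨v, hv, hfv⟩
  · exact ⟨f, between_mono_left (innerComponent_subset hm) hfW, fun h => h.2 rfl⟩
  · have hmv : m ∈ D \ {v} := ⟨hm.1, fun h => hm.2 (h ▸ hv)⟩
    have hsub := subsingleton_exitsAvoiding_of_minimal hD hv hmv (hdeg v)
      (between_mono_right (innerComponent_subset_componentIn hv) hfv)
    exact Set.not_subset.1 fun h => hD.prop.nontrivial.not_subsingleton (hsub.anti h)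

theorem three_le_ncard_between_innerComponent_compl (hG : G.EdgeConnected 3)
    (hD : G.IsDetachable W D) (hm : m ∈ D \ G.attachments D (W \ D)) :
    3 ≤ (G.between (G.innerComponent W D m) (G.innerComponent W D m)ᶜ).ncard := by
  obtain ⟨w, -, hwD⟩ := hD.sdiff_nonempty
  exact hG.le_ncard_between_compl ⟨m, mem_componentIn_self _ m⟩
    ⟨w, fun h => hwD (innerComponent_subset hm h)⟩

theorem exists_mem_between_attachment_of_minimal [Finite E] (hG : G.EdgeConnected 3)
    (hW : G.InducedPreconnected W) (hD : Minimal (G.IsDetachable W) D)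
    (hm : m ∈ D \ G.attachments D (W \ D)) :
    ∃ f ∈ G.between (G.innerComponent W D m) (G.innerComponent W D m)ᶜ,
      ∃ v ∈ G.attachments D (W \ D), f ∈ G.between {v} (G.innerComponent W D m) := by
  by_contra! hno
  obtain ⟨w, hw⟩ := hD.prop.sdiff_nonempty
  obtain ⟨e, v, ⟨-, hvD⟩, b, hb, hl⟩ :=
    hW.between_inter_sdiff_nonempty ⟨hD.prop.subset hm.1, hm.1⟩ hw
  have hv : v ∈ G.attachments D (W \ D) := ⟨hvD, e, v, rfl, b, hb, hl⟩
  have hsub : G.between (G.innerComponent W D m) (G.innerComponent W D m)ᶜ ⊆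
      G.between (G.componentIn (D \ {v}) m) Wᶜ := fun f hf =>
    between_mono_left (innerComponent_subset_componentIn hv) <|
      (mem_between_innerComponent_compl hm hf).resolve_right fun ⟨u, hu, hfu⟩ => hno f hf u hu hfu
  have hone := subsingleton_between_componentIn_of_minimal hD hv ⟨hm.1, fun h => hm.2 (h ▸ hv)⟩
  have hle := Set.ncard_le_one_iff_subsingleton.2 (hone.anti hsub)
  have hcut := three_le_ncard_between_innerComponent_compl hG hD.prop hm
  omega

theorem subset_attachments_of_minimal [Finite E] (hG : G.EdgeConnected 3)
    (hdeg : ∀ v, G.degree v ≤ 3) (hW : G.InducedPreconnected W)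
    (hD : Minimal (G.IsDetachable W) D) : D ⊆ G.attachments D (W \ D) := by
  by_contra hsub
  obtain ⟨m, hm⟩ := Set.not_subset.1 hsub
  obtain ⟨f₀, hf₀, v, hv, hf₀v⟩ := exists_mem_between_attachment_of_minimal hG hW hD hm
  have hcover {f f' : E} := between_subset_union_exitsAvoiding (f := f) (f' := f')
    (inducedPreconnected_componentIn _ m) (mem_componentIn_self _ m)
    (innerComponent_subset hm) hD.prop.connected
    (Set.disjoint_compl_right_iff_subset.2 hD.prop.subset)
  have hf₀exits : (G.exitsAvoiding D Wᶜ m f₀).Subsingleton :=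
    subsingleton_exitsAvoiding_of_minimal hD hv ⟨hm.1, fun h => hm.2 (h ▸ hv)⟩ (hdeg v)
      (between_mono_right (innerComponent_subset_componentIn hv) hf₀v)
  obtain ⟨f₁, ⟨hf₁, hne₁⟩, f₂, ⟨hf₂, hne₂⟩, hne⟩ :
      (G.between (G.innerComponent W D m) (G.innerComponent W D m)ᶜ \ {f₀}).Nontrivial := by
    rw [← Set.one_lt_ncard_iff_nontrivial, Set.ncard_sdiff_singleton_of_mem hf₀]
    have hcut := three_le_ncard_between_innerComponent_compl hG hD.prop hm
    omega
  obtain ⟨z₁, hz₁, hz₁f⟩ := exists_notMem_exitsAvoiding_of_minimal hD hdeg hm hf₁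
  obtain ⟨z₂, hz₂, hz₂f⟩ := exists_notMem_exitsAvoiding_of_minimal hD hdeg hm hf₂
  have hz : z₁ = z₂ := hf₀exits ((hcover hf₁ hf₀ hne₁ hz₁).resolve_left hz₁f)
    ((hcover hf₂ hf₀ hne₂ hz₂).resolve_left hz₂f)
  exact (hcover hf₁ hf₂ hne hz₁).elim hz₁f (hz ▸ hz₂f)

theorem exists_isDetachable_subset_attachments [Finite V] [Finite E] (hG : G.EdgeConnected 3)
    (hdeg : ∀ v, G.degree v ≤ 3) (hW : G.InducedPreconnected W) (hWc : Wᶜ.Nonempty)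
    (hnt : W.Nontrivial) : ∃ D, G.IsDetachable W D ∧ D ⊆ G.attachments D (W \ D) := by
  obtain ⟨D, hD⟩ := exists_minimal_of_wellFoundedLT _ (exists_isDetachable hG hW hWc hnt)
  exact ⟨D, hD.prop, subset_attachments_of_minimal hG hdeg hW hD⟩

end Detachable

section Construction

variable {W D : Set V} {B : Set E} {r x : V}

theorem Cubic.nontrivial [Nonempty V] (hc : G.Cubic) : Nontrivial V := by
  by_contra hV
  rw [not_nontrivial_iff_subsingleton] at hV
  obtain ⟨v⟩ := ‹Nonempty V›
  have huniv (p : E → V) : {e | p e = v} = Set.univ :=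
    Set.eq_univ_of_forall fun _ => Subsingleton.elim _ _
  have hv := hc v
  simp only [degree, huniv] at hv
  omega

theorem inducedPreconnected_compl_singleton [Finite E] {k : ℕ} (hG : G.EdgeConnected k)
    (hdeg : G.degree x < 2 * k) : G.InducedPreconnected {x}ᶜ := by
  intro u hu v hv
  by_contra huv
  set Cu := G.componentIn {x}ᶜ u
  set Cv := G.componentIn {x}ᶜ v
  have hdisj : Disjoint Cu Cv :=
    Set.disjoint_left.2 fun w hwu hwv => huv (Reaches.trans hwu (Reaches.symm hwv))
  have hcut : ∀ w ∈ ({x}ᶜ : Set V), k ≤ (G.between {x} (G.componentIn {x}ᶜ w)).ncard := by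
    intro w hw
    have hsub := between_componentIn_compl_subset (G := G) hw
    rw [compl_compl, between_comm _ {x}] at hsub
    exact (hG.le_ncard_between_compl ⟨w, mem_componentIn_self _ w⟩
      ⟨x, fun hx => componentIn_subset hw hx rfl⟩).trans (Set.ncard_le_ncard hsub)
  have hsum := ncard_between_add_le_degree (G := G) hdisj fun hx => componentIn_subset hv hx rfl
  have hcutu : k ≤ (G.between {x} Cu).ncard := hcut u hu
  have hcutv : k ≤ (G.between {x} Cv).ncard := hcut v hv
  omega

/-- The invariant of the construction of a peripheral 2-base from inside a vertex set `W`: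
deleting the edge set `B` keeps the subgraph induced on `W` connected, and a 2-closed set that
contains `B` and connects the complement of `W` connects all vertices. -/
structure IsRelativeBase (G : Multigraph V E) (W : Set V) (B : Set E) : Prop where
  subset_inside : B ⊆ G.inside W
  connected : G.PreconnectedVia (· ∈ G.inside W \ B) W
  spans : ∀ R, B ⊆ R → G.Closed 2 R → G.PreconnectedVia (· ∈ R) Wᶜ →
    G.PreconnectedVia (· ∈ R) Set.univ

theorem isRelativeBase_singleton (h : (G.between {r} {r}ᶜ).Nontrivial) :
    G.IsRelativeBase {r} ∅ where
  subset_inside := Set.empty_subset _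
  connected := preconnectedVia_singleton _ r
  spans R _ hR hc := by
    rw [← Set.union_compl_self {r}]
    exact hR.preconnectedVia_union one_lt_two (preconnectedVia_singleton _ r) hc h

theorem IsRelativeBase.union_inside (hB : G.IsRelativeBase (W \ D) B) (hD : G.IsDetachable W D)
    (hatt : D ⊆ G.attachments D (W \ D)) : G.IsRelativeBase W (B ∪ G.inside D) where
  subset_inside :=
    Set.union_subset (hB.subset_inside.trans (inside_mono Set.sdiff_subset)) (inside_mono hD.subset)
  connected := by
    have hconn : G.PreconnectedVia (· ∈ G.inside W \ (B ∪ G.inside D)) (W \ D) := by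
      refine hB.connected.mono fun e he => ⟨inside_mono Set.sdiff_subset he.1, ?_⟩
      exact fun h => h.elim he.2 fun heD => he.1.1.2 heD.1
    refine hconn.of_forall_exists_reaches fun u hu => ?_
    by_cases huD : u ∈ D
    · obtain ⟨-, e, he⟩ := hatt huD
      obtain ⟨w, hw, hl⟩ := mem_between_singleton_iff.1 he
      have heB : e ∉ B := fun heB => (hl.mem_inside_iff.1 (hB.subset_inside heB)).1.2 huD
      have heD : e ∉ G.inside D := fun heD => hw.2 (hl.mem_inside_iff.1 heD).2
      exact ⟨w, hw, hl.reaches ⟨hl.mem_inside_iff.2 ⟨hu, hw.1⟩, fun h => h.elim heB heD⟩⟩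
    · exact ⟨u, ⟨hu, huD⟩, .refl⟩
  spans R hBR hR hc := by
    refine hB.spans R (Set.subset_union_left.trans hBR) hR ?_
    rw [Set.compl_sdiff]
    exact hR.preconnectedVia_union one_lt_two
      (hD.connected.mono fun _ he => hBR (Or.inr he)) hc hD.nontrivial

theorem exists_isRelativeBase [Finite V] [Finite E] (hG : G.EdgeConnected 3)
    (hdeg : ∀ v, G.degree v ≤ 3) (hW : G.InducedPreconnected W) (hne : W.Nonempty)
    (hWc : Wᶜ.Nonempty) : ∃ B, G.IsRelativeBase W B := by
  induction W using WellFoundedLT.induction with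
  | ind W ih =>
    rcases hne.exists_eq_singleton_or_nontrivial with ⟨r, rfl⟩ | hnt
    · have hcut := hG.le_ncard_between_compl hne hWc
      exact ⟨∅, isRelativeBase_singleton (Set.one_lt_ncard_iff_nontrivial.1 (by omega))⟩
    · obtain ⟨D, hD, hatt⟩ := exists_isDetachable_subset_attachments hG hdeg hW hWc hnt
      obtain ⟨_, d, hd, -⟩ := hD.nontrivial.nonempty
      have hlt : W \ D < W :=
        Set.ssubset_iff_exists.2 ⟨Set.sdiff_subset, d, hD.subset hd, fun h => h.2 hd⟩
      obtain ⟨B, hB⟩ := ih (W \ D) hlt hD.sdiff_connected hD.sdiff_nonempty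
        (hWc.mono (Set.compl_subset_compl.2 Set.sdiff_subset))
      exact ⟨B ∪ G.inside D, hB.union_inside hD hatt⟩

theorem IsRelativeBase.isBase_two (h : G.IsRelativeBase {x}ᶜ B) : G.IsBase 2 B := by
  refine isBase_iff.2 fun R hBR hR => hR.eq_univ two_pos (h.spans R hBR hR ?_)
  rw [compl_compl]
  exact preconnectedVia_singleton _ x

theorem IsRelativeBase.peripheral (h : G.IsRelativeBase {x}ᶜ B)
    (hx : (G.between {x} {x}ᶜ).Nonempty) : G.Peripheral B := by
  obtain ⟨e, he⟩ := hx
  obtain ⟨v, hv, hl⟩ := mem_between_singleton_iff.1 he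
  have heB : e ∉ B := fun heB => (hl.mem_inside_iff.1 (h.subset_inside heB)).1 rfl
  have hconn : G.PreconnectedVia (· ∉ B) ({x} ∪ {x}ᶜ) :=
    (preconnectedVia_singleton _ x).union (h.connected.mono fun _ he => he.2) rfl hv
      (hl.reaches heB)
  rw [Set.union_compl_self] at hconn
  exact ⟨⟨x⟩, fun u v => hconn u trivial v trivial⟩

end Construction

end Multigraph

/-- The edge set of every 3-edge-connected cubic graph can be partitioned into a 1-base
and a 2-base; equivalently, it has a peripheral 2-base `B` (then `Bᶜ` is a 1-base). -/
theorem one_base_two_base_decomposition {V E : Type} [Fintype V] [Fintype E]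
    (G : Multigraph V E) (hG : G.EdgeConnected 3) (hcubic : G.Cubic) :
    ∃ B : Set E, G.Peripheral B ∧ G.IsBase 2 B ∧ G.IsBase 1 Bᶜ := by
  have : Nonempty V := (hG ∅ (by simp)).1
  have := hcubic.nontrivial
  obtain ⟨x, y, hxy⟩ := exists_pair_ne V
  have hW : G.InducedPreconnected {x}ᶜ :=
    Multigraph.inducedPreconnected_compl_singleton hG (by rw [hcubic x]; norm_num)
  have hne : ({x}ᶜ : Set V).Nonempty := ⟨y, hxy.symm⟩
  have hcut : 3 ≤ (G.between {x} {x}ᶜ).ncard := hG.le_ncard_between_compl ⟨x, rfl⟩ hne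
  obtain ⟨B, hB⟩ := Multigraph.exists_isRelativeBase hG (fun v => (hcubic v).le) hW hne
    ⟨x, Set.notMem_compl_iff.2 rfl⟩
  have hperipheral : G.Peripheral B :=
    hB.peripheral (Set.nonempty_of_ncard_ne_zero (by omega))
  exact ⟨B, hperipheral, hB.isBase_two, hperipheral.isBase_compl one_pos⟩
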